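/- Let n ≥ 2 be an integer, let (Ω, μ) be a probability measure space, and let X : Ω → [0, ∞) be a measurable function with ∫_Ω X dμ ≥ 1. Let α > 0 be a real number satisfying (α² + n − 1)^{(n−2)/2} (α² − 1) ≤ α^n. Then ∫_Ω ( α² + (n−1)·X^{2/(n−1)} )^{n/2} dμ ≥ (α² + n − 1)^{n/2}, with equality if and only if X = 1 μ-almost everywhere. -/

import Mathlib

open MeasureTheory

noncomputable section Aux

def auxL (k : ℕ) (α t : ℝ) : ℝ :=
  (k : ℝ) / 2 * Real.log (α ^ 2 + ((k : ℝ) + 1) * t ^ 2) - ((k : ℝ) - 1) * Real.log t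

def auxG (k : ℕ) (α t : ℝ) : ℝ :=
  (α ^ 2 + ((k : ℝ) + 1) * t ^ 2) ^ (((k : ℝ) + 2) / 2)
    - (α ^ 2 + ((k : ℝ) + 1)) ^ (((k : ℝ) + 2) / 2)
    - ((k : ℝ) + 2) * (α ^ 2 + ((k : ℝ) + 1)) ^ ((k : ℝ) / 2) * (t ^ (k + 1) - 1)

lemma auxL_deriv (k : ℕ) {α t : ℝ} (hα : 0 < α) (ht : 0 < t) :
    HasDerivAt (auxL k α)
      ((((k : ℝ) + 1) * t ^ 2 - ((k : ℝ) - 1) * α ^ 2) /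
        (t * (α ^ 2 + ((k : ℝ) + 1) * t ^ 2))) t := by
  have hB : 0 < α ^ 2 + ((k : ℝ) + 1) * t ^ 2 := by positivity
  have h1 : HasDerivAt (fun t : ℝ => α ^ 2 + ((k : ℝ) + 1) * t ^ 2)
      (((k : ℝ) + 1) * (2 * t)) t := by
    simpa using (((hasDerivAt_pow 2 t).const_mul ((k : ℝ) + 1)).const_add (α ^ 2))
  have h2 := ((h1.log hB.ne').const_mul ((k : ℝ) / 2)).sub
    ((Real.hasDerivAt_log ht.ne').const_mul ((k : ℝ) - 1))
  refine h2.congr_deriv ?_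
  field_simp
  ring

lemma auxG_deriv (k : ℕ) {α t : ℝ} (hα : 0 < α) :
    HasDerivAt (auxG k α)
      (((k : ℝ) + 1) * ((k : ℝ) + 2) * (t * (α ^ 2 + ((k : ℝ) + 1) * t ^ 2) ^ ((k : ℝ) / 2)
        - (α ^ 2 + ((k : ℝ) + 1)) ^ ((k : ℝ) / 2) * t ^ k)) t := by
  have hB : 0 < α ^ 2 + ((k : ℝ) + 1) * t ^ 2 := by positivity
  have h1 : HasDerivAt (fun t : ℝ => α ^ 2 + ((k : ℝ) + 1) * t ^ 2)
      (((k : ℝ) + 1) * (2 * t)) t := by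
    simpa using (((hasDerivAt_pow 2 t).const_mul ((k : ℝ) + 1)).const_add (α ^ 2))
  have h2 := ((h1.rpow_const (p := ((k : ℝ) + 2) / 2) (Or.inl hB.ne')).sub_const
      ((α ^ 2 + ((k : ℝ) + 1)) ^ (((k : ℝ) + 2) / 2))).sub
    (((hasDerivAt_pow (k + 1) t).sub_const 1).const_mul
      (((k : ℝ) + 2) * (α ^ 2 + ((k : ℝ) + 1)) ^ ((k : ℝ) / 2)))
  refine h2.congr_deriv ?_
  have e : ((k : ℝ) + 2) / 2 - 1 = (k : ℝ) / 2 := by ring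
  rw [e]
  push_cast
  ring

lemma auxL_quasi (k : ℕ) {α a b c : ℝ} (hα : 0 < α) (ha : 0 < a) (hab : a < b) (hbc : b < c) :
    auxL k α b < auxL k α a ∨ auxL k α b < auxL k α c := by
  have hb : 0 < b := ha.trans hab
  rcases le_total (((k : ℝ) + 1) * b ^ 2) (((k : ℝ) - 1) * α ^ 2) with h | h
  · left
    have : StrictAntiOn (auxL k α) (Set.Icc a b) := by
      refine strictAntiOn_of_deriv_neg (convex_Icc a b) ?_ ?_
      · intro x hx
        exact (auxL_deriv k hα (ha.trans_le hx.1)).continuousAt.continuousWithinAt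
      · intro x hx
        rw [interior_Icc] at hx
        have hx0 : 0 < x := ha.trans hx.1
        rw [(auxL_deriv k hα hx0).deriv]
        refine div_neg_of_neg_of_pos ?_ (by positivity)
        have : x ^ 2 < b ^ 2 := by have := hx.2; gcongr
        have : ((k : ℝ) + 1) * x ^ 2 < ((k : ℝ) + 1) * b ^ 2 := by gcongr
        linarith
    exact this ⟨le_rfl, hab.le⟩ ⟨hab.le, le_rfl⟩ hab
  · right
    have : StrictMonoOn (auxL k α) (Set.Icc b c) := by
      refine strictMonoOn_of_deriv_pos (convex_Icc b c) ?_ ?_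
      · intro x hx
        exact (auxL_deriv k hα (hb.trans_le hx.1)).continuousAt.continuousWithinAt
      · intro x hx
        rw [interior_Icc] at hx
        have hx0 : 0 < x := hb.trans hx.1
        rw [(auxL_deriv k hα hx0).deriv]
        refine div_pos ?_ (by positivity)
        have : b ^ 2 < x ^ 2 := by have := hx.1; gcongr
        have : ((k : ℝ) + 1) * b ^ 2 < ((k : ℝ) + 1) * x ^ 2 := by gcongr
        linarith
    exact this ⟨le_rfl, hbc.le⟩ ⟨hbc.le, le_rfl⟩ hbc

lemma aux_log1 (k : ℕ) {α t : ℝ} (hα : 0 < α) (ht : 0 < t) :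
    Real.log (t * (α ^ 2 + ((k : ℝ) + 1) * t ^ 2) ^ ((k : ℝ) / 2)) =
      auxL k α t + k * Real.log t := by
  have hB : 0 < α ^ 2 + ((k : ℝ) + 1) * t ^ 2 := by positivity
  rw [Real.log_mul ht.ne' (by positivity), Real.log_rpow hB, auxL]
  ring

lemma aux_log2 (k : ℕ) {α t : ℝ} (hα : 0 < α) (ht : 0 < t) :
    Real.log ((α ^ 2 + ((k : ℝ) + 1)) ^ ((k : ℝ) / 2) * t ^ k) =
      auxL k α 1 + k * Real.log t := by
  have hB : 0 < α ^ 2 + ((k : ℝ) + 1) := by positivity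
  rw [Real.log_mul (by positivity) (by positivity), Real.log_rpow hB, Real.log_pow, auxL]
  simp

lemma auxG_pos (k : ℕ) {α t : ℝ} (hα : 0 < α) (ht : 0 < t) (h : auxL k α 1 < auxL k α t) :
    0 < deriv (auxG k α) t := by
  rw [(auxG_deriv k hα).deriv]
  refine mul_pos (by positivity) (sub_pos.2 ?_)
  rw [← Real.log_lt_log_iff (by positivity) (by positivity), aux_log1 k hα ht, aux_log2 k hα ht]
  linarith

lemma auxG_neg (k : ℕ) {α t : ℝ} (hα : 0 < α) (ht : 0 < t) (h : auxL k α t < auxL k α 1) :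
    deriv (auxG k α) t < 0 := by
  rw [(auxG_deriv k hα).deriv]
  refine mul_neg_of_pos_of_neg (by positivity) (sub_neg.2 ?_)
  rw [← Real.log_lt_log_iff (by positivity) (by positivity), aux_log1 k hα ht, aux_log2 k hα ht]
  linarith

lemma auxG_mono (k : ℕ) {α a b : ℝ} (hα : 0 < α) (ha : 0 ≤ a) (hab : a < b)
    (h : ∀ s, a < s → s < b → auxL k α 1 < auxL k α s) : auxG k α a < auxG k α b := by
  have : StrictMonoOn (auxG k α) (Set.Icc a b) := by
    refine strictMonoOn_of_deriv_pos (convex_Icc a b) ?_ ?_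
    · intro x hx
      exact (auxG_deriv k hα).continuousAt.continuousWithinAt
    · intro x hx
      rw [interior_Icc] at hx
      exact auxG_pos k hα (ha.trans_lt hx.1) (h x hx.1 hx.2)
  exact this ⟨le_rfl, hab.le⟩ ⟨hab.le, le_rfl⟩ hab

lemma auxG_anti (k : ℕ) {α a b : ℝ} (hα : 0 < α) (ha : 0 ≤ a) (hab : a < b)
    (h : ∀ s, a < s → s < b → auxL k α s < auxL k α 1) : auxG k α b < auxG k α a := by
  have : StrictAntiOn (auxG k α) (Set.Icc a b) := by
    refine strictAntiOn_of_deriv_neg (convex_Icc a b) ?_ ?_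
    · intro x hx
      exact (auxG_deriv k hα).continuousAt.continuousWithinAt
    · intro x hx
      rw [interior_Icc] at hx
      exact auxG_neg k hα (ha.trans_lt hx.1) (h x hx.1 hx.2)
  exact this ⟨le_rfl, hab.le⟩ ⟨hab.le, le_rfl⟩ hab

lemma auxG_one (k : ℕ) (α : ℝ) : auxG k α 1 = 0 := by simp [auxG]

lemma auxG_main (k : ℕ) {α t : ℝ} (hα : 0 < α) (h0 : 0 ≤ auxG k α 0) (ht : 0 < t) (ht1 : t ≠ 1) :
    0 < auxG k α t := by
  rcases lt_or_gt_of_ne ht1 with h | h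
  · rcases le_or_gt (auxL k α t) (auxL k α 1) with hl | hl
    · rw [← auxG_one k α]
      refine auxG_anti k hα ht.le h fun s hs hs1 => ?_
      rcases auxL_quasi k hα ht hs hs1 with h' | h' <;> linarith
    · refine h0.trans_lt (auxG_mono k hα le_rfl ht fun s hs hs1 => ?_)
      by_contra! hc
      rcases auxL_quasi k hα hs hs1 h with h' | h' <;> linarith
  · rw [← auxG_one k α]
    refine auxG_mono k hα zero_le_one h fun s hs hs1 => ?_
    by_contra! hc
    have : auxG k α 0 < auxG k α 1 := by
      refine auxG_mono k hα le_rfl one_pos fun r hr hr1 => ?_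
      by_contra! hc2
      rcases auxL_quasi k hα hr hr1 hs with h' | h' <;> linarith
    rw [auxG_one] at this
    linarith

lemma aux_point (k : ℕ) {α x : ℝ} (hα : 0 < α) (h0 : 0 ≤ auxG k α 0) (hx : 0 ≤ x) :
    ((α ^ 2 + ((k : ℝ) + 1)) ^ (((k : ℝ) + 2) / 2)
      + ((k : ℝ) + 2) * (α ^ 2 + ((k : ℝ) + 1)) ^ ((k : ℝ) / 2) * x ≤
    (α ^ 2 + ((k : ℝ) + 1) * x ^ ((2 : ℝ) / ((k : ℝ) + 1))) ^ (((k : ℝ) + 2) / 2)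
      + ((k : ℝ) + 2) * (α ^ 2 + ((k : ℝ) + 1)) ^ ((k : ℝ) / 2)) ∧
    ((α ^ 2 + ((k : ℝ) + 1)) ^ (((k : ℝ) + 2) / 2)
      + ((k : ℝ) + 2) * (α ^ 2 + ((k : ℝ) + 1)) ^ ((k : ℝ) / 2) * x =
    (α ^ 2 + ((k : ℝ) + 1) * x ^ ((2 : ℝ) / ((k : ℝ) + 1))) ^ (((k : ℝ) + 2) / 2)
      + ((k : ℝ) + 2) * (α ^ 2 + ((k : ℝ) + 1)) ^ ((k : ℝ) / 2) → x ≤ 1) := by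
  obtain ⟨t, ht, rfl⟩ : ∃ t : ℝ, 0 ≤ t ∧ t ^ (k + 1) = x := by
    refine ⟨x ^ (((k + 1 : ℕ) : ℝ)⁻¹), by positivity, Real.rpow_inv_natCast_pow hx (by simp)⟩
  have e : (t ^ (k + 1)) ^ ((2 : ℝ) / ((k : ℝ) + 1)) = t ^ 2 := by
    rw [← Real.rpow_natCast, ← Real.rpow_natCast, ← Real.rpow_mul ht]
    congr 1
    push_cast
    field_simp
  rw [e]
  have key : 0 ≤ auxG k α t := by
    rcases ht.eq_or_lt with h | h
    · rwa [← h]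
    by_cases h1 : t = 1
    · rw [h1, auxG_one]
    · exact (auxG_main k hα h0 h h1).le
  constructor
  · unfold auxG at key
    linarith
  · intro h
    by_contra! hc
    have h1 : 1 < t := by
      by_contra! h'
      exact absurd (pow_le_one₀ ht h') (not_le.2 hc)
    have := auxG_main k hα h0 (by linarith) h1.ne'
    unfold auxG at this
    linarith

lemma aux_zero (k : ℕ) {α : ℝ} (hα : 0 < α)
    (hcrit : (α ^ 2 + ((k : ℝ) + 1)) ^ ((k : ℝ) / 2) * (α ^ 2 - 1) ≤ α ^ ((k : ℝ) + 2)) :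
    0 ≤ auxG k α 0 := by
  have hA : 0 < α ^ 2 + ((k : ℝ) + 1) := by positivity
  have e1 : (α ^ 2) ^ (((k : ℝ) + 2) / 2) = α ^ ((k : ℝ) + 2) := by
    rw [← Real.rpow_natCast, ← Real.rpow_mul hα.le]
    congr 1
    push_cast
    ring
  have e2 : (α ^ 2 + ((k : ℝ) + 1)) ^ (((k : ℝ) + 2) / 2) =
      (α ^ 2 + ((k : ℝ) + 1)) ^ ((k : ℝ) / 2) * (α ^ 2 + ((k : ℝ) + 1)) := by
    rw [← Real.rpow_add_one hA.ne']
    congr 1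
    ring
  unfold auxG
  rw [e2]
  simp only [ne_eq, OfNat.ofNat_ne_zero, not_false_eq_true, zero_pow, mul_zero, add_zero, e1,
    Nat.add_eq_zero_iff, one_ne_zero, and_false]
  linarith

end Aux

/-- Case 1 of the random-variable energy minimization.
Let `(Ω, μ)` be a probability space, `X ≥ 0` measurable with
`∫ X dμ ≥ 1`, and `α > 0` with `(α² + n - 1)^((n-2)/2)(α² - 1) ≤ α^n`.
Then `∫ (α² + (n-1)X^(2/(n-1)))^(n/2) dμ ≥ (α² + n - 1)^(n/2)`, with
equality iff `X = 1` a.e.  (The integrals are Lebesgue integrals of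
nonnegative functions, allowed to be `+∞`.) -/
theorem stmt14 (n : ℕ) (hn : 2 ≤ n)
    {Ω : Type*} [MeasurableSpace Ω] (μ : Measure Ω) [IsProbabilityMeasure μ]
    (X : Ω → ℝ) (hXmeas : Measurable X) (hX0 : ∀ ω, 0 ≤ X ω)
    (hmean : 1 ≤ ∫⁻ ω, ENNReal.ofReal (X ω) ∂μ)
    (α : ℝ) (hα : 0 < α)
    (hcrit : (α ^ 2 + (n : ℝ) - 1) ^ (((n : ℝ) - 2) / 2) * (α ^ 2 - 1) ≤ α ^ (n : ℝ)) :
    ENNReal.ofReal ((α ^ 2 + (n : ℝ) - 1) ^ ((n : ℝ) / 2)) ≤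
      (∫⁻ ω, ENNReal.ofReal
        ((α ^ 2 + ((n : ℝ) - 1) * (X ω) ^ ((2 : ℝ) / ((n : ℝ) - 1))) ^ ((n : ℝ) / 2)) ∂μ) ∧
    ((∫⁻ ω, ENNReal.ofReal
        ((α ^ 2 + ((n : ℝ) - 1) * (X ω) ^ ((2 : ℝ) / ((n : ℝ) - 1))) ^ ((n : ℝ) / 2)) ∂μ) =
      ENNReal.ofReal ((α ^ 2 + (n : ℝ) - 1) ^ ((n : ℝ) / 2)) ↔
      X =ᵐ[μ] fun _ => 1) := by
  obtain ⟨k, rfl⟩ : ∃ k, n = k + 2 := ⟨n - 2, by omega⟩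
  have c1 : ((k + 2 : ℕ) : ℝ) = (k : ℝ) + 2 := by push_cast; ring
  have c2 : (k : ℝ) + 2 - 1 = (k : ℝ) + 1 := by ring
  have c3 : α ^ 2 + ((k : ℝ) + 2) - 1 = α ^ 2 + ((k : ℝ) + 1) := by ring
  have c4 : (k : ℝ) + 2 - 2 = (k : ℝ) := by ring
  rw [c1, c3, c4] at hcrit
  rw [c1, c3, c2]
  have h0 := aux_zero k hα hcrit
  set s : ℝ := ((k : ℝ) + 2) * (α ^ 2 + ((k : ℝ) + 1)) ^ ((k : ℝ) / 2) with hs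
  have hspos : 0 < s := by positivity
  set M : ℝ := (α ^ 2 + ((k : ℝ) + 1)) ^ (((k : ℝ) + 2) / 2) with hM
  have hMpos : 0 < M := by positivity
  set f : Ω → ℝ := fun ω =>
    (α ^ 2 + ((k : ℝ) + 1) * (X ω) ^ ((2 : ℝ) / ((k : ℝ) + 1))) ^ (((k : ℝ) + 2) / 2) with hf
  have hfm : Measurable f := by
    rw [hf]; fun_prop
  have hf0 : ∀ ω, 0 ≤ f ω := fun ω => by
    have := hX0 ω
    rw [hf]; positivity
  have hp : ∀ ω, M + s * X ω ≤ f ω + s ∧ (M + s * X ω = f ω + s → X ω ≤ 1) :=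
    fun ω => aux_point k hα h0 (hX0 ω)
  have i1 : ∫⁻ ω, ENNReal.ofReal (f ω + s) ∂μ =
      (∫⁻ ω, ENNReal.ofReal (f ω) ∂μ) + ENNReal.ofReal s := by
    simp_rw [fun ω => ENNReal.ofReal_add (hf0 ω) hspos.le]
    rw [lintegral_add_right _ measurable_const]
    simp
  have i2 : ∫⁻ ω, ENNReal.ofReal (M + s * X ω) ∂μ =
      ENNReal.ofReal M + ENNReal.ofReal s * ∫⁻ ω, ENNReal.ofReal (X ω) ∂μ := by
    simp_rw [fun ω => ENNReal.ofReal_add hMpos.le (mul_nonneg hspos.le (hX0 ω)),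
      ENNReal.ofReal_mul hspos.le]
    rw [lintegral_add_left measurable_const, lintegral_const_mul _ (by fun_prop)]
    simp
  have i3 : ENNReal.ofReal M + ENNReal.ofReal s ≤ ∫⁻ ω, ENNReal.ofReal (M + s * X ω) ∂μ := by
    rw [i2]
    gcongr
    exact le_mul_of_one_le_right' hmean
  have i4 : ∫⁻ ω, ENNReal.ofReal (M + s * X ω) ∂μ ≤ ∫⁻ ω, ENNReal.ofReal (f ω + s) ∂μ :=
    lintegral_mono fun ω => ENNReal.ofReal_le_ofReal (hp ω).1
  refine ⟨?_, ?_, ?_⟩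
  · have := i3.trans (i4.trans i1.le)
    exact (ENNReal.add_le_add_iff_right ENNReal.ofReal_ne_top).1 this
  · intro h
    change ∫⁻ ω, ENNReal.ofReal (f ω) ∂μ = _ at h
    rw [h] at i1
    have hfin : ∫⁻ ω, ENNReal.ofReal (M + s * X ω) ∂μ ≠ ⊤ := by
      refine ne_top_of_le_ne_top ?_ i4
      rw [i1]
      simp
    have ae1 := ae_eq_of_ae_le_of_lintegral_le
      (Filter.Eventually.of_forall fun ω => ENNReal.ofReal_le_ofReal (hp ω).1)
      hfin (by fun_prop) (i1.le.trans i3)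
    have hle : ∀ᵐ ω ∂μ, ENNReal.ofReal (X ω) ≤ 1 := by
      filter_upwards [ae1] with ω hω
      rw [ENNReal.ofReal_eq_ofReal_iff (by have := hX0 ω; positivity)
        (add_nonneg (hf0 ω) hspos.le)] at hω
      exact ENNReal.ofReal_le_one.2 ((hp ω).2 hω)
    have hfin2 : ∫⁻ ω, ENNReal.ofReal (X ω) ∂μ ≠ ⊤ := by
      refine ne_top_of_le_ne_top ENNReal.one_ne_top ((lintegral_mono_ae hle).trans ?_)
      simp
    have ae2 := ae_eq_of_ae_le_of_lintegral_le hle hfin2 (by fun_prop) (by simpa using hmean)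
    filter_upwards [ae2] with ω hω
    simpa using hω
  · intro h
    have : ∫⁻ ω, ENNReal.ofReal (f ω) ∂μ = ∫⁻ ω, ENNReal.ofReal M ∂μ := by
      refine lintegral_congr_ae ?_
      filter_upwards [h] with ω hω
      simp [hf, hM, hω]
    change ∫⁻ ω, ENNReal.ofReal (f ω) ∂μ = _
    rw [this]
    simp
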